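/- In R(4) the following equalities hold: w_{12,3,4} − w_{1,3,4} − w_{2,3,4} = w_{1,23,4} − w_{1,2,4} − w_{1,3,4} = w_{1,2,34} − w_{1,2,3} − w_{1,2,4}. (The common value is twice the central element x_{1234}.) -/

import Mathlib

noncomputable section

open Finset

variable {A : Type*} [Ring A] [Algebra ℂ A]

/-- Commutator `[a,b] = ab − ba`. -/
def cm (a b : A) : A := a * b - b * a

/-- Anticommutator `{a,b} = ab + ba`. -/
def acm (a b : A) : A := a * b + b * a

/-- Relations (R1): `[C_I, C_J] = 0` whenever `I ∩ J = ∅`, `I ⊆ J` or `J ⊆ I`. -/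
def RelR1 (C : Finset (Fin 4) → A) : Prop :=
  ∀ I J : Finset (Fin 4), (I ∩ J = ∅ ∨ I ⊆ J ∨ J ⊆ I) → cm (C I) (C J) = 0

/-- Relations (R2): `C_I = (1/2)∑_{i≠j∈I} C_{ij} − (|I|−2)∑_{i∈I} C_i` for `|I| ≥ 3`. -/
def RelR2 (C : Finset (Fin 4) → A) : Prop :=
  ∀ I : Finset (Fin 4), 3 ≤ I.card →
    C I = ((1 : ℂ)/2) • (∑ i ∈ I, ∑ j ∈ I \ {i}, C {i, j})
      - ((I.card : ℂ) - 2) • ∑ i ∈ I, C {i}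

/-- Relations (R3), for nonempty pairwise disjoint `I, J, K`. -/
def RelR3 (C : Finset (Fin 4) → A) : Prop :=
  ∀ I J K : Finset (Fin 4), I.Nonempty → J.Nonempty → K.Nonempty →
    Disjoint I J → Disjoint J K → Disjoint I K →
    cm (C (I ∪ J)) (C (J ∪ K)) = cm (C (J ∪ K)) (C (I ∪ K)) ∧
    cm (C (J ∪ K)) (C (I ∪ K)) = cm (C (I ∪ K)) (C (I ∪ J)) ∧
    cm (C (J ∪ K)) (cm (C (I ∪ J)) (C (J ∪ K))) =
      2 * (C (I ∪ K) * C (J ∪ K)) - 2 * (C (J ∪ K) * C (I ∪ J))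
        + 2 * ((C J - C K) * (C (I ∪ J ∪ K) - C I))

/-- Relations (R4), for pairwise distinct `i, j, k, l`. -/
def RelR4 (C : Finset (Fin 4) → A) : Prop :=
  ∀ i j k l : Fin 4, i ≠ j → i ≠ k → i ≠ l → j ≠ k → j ≠ l → k ≠ l →
    ((1 : ℂ)/2) • cm (C {k, l}) (cm (C {i, j}) (C {j, k})) =
      C {i, k} * C {j, l} - C {i, l} * C {j, k}
      + (C {i} + C {l}) * C {j, k} + (C {j} + C {k}) * C {i, l}
      - (C {j} + C {l}) * C {i, k} - (C {i} + C {k}) * C {j, l}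
      + (C {i} - C {j}) * (C {l} - C {k})

/-- Relations (R5), for pairwise distinct `i, j, k, l`. -/
def RelR5 (C : Finset (Fin 4) → A) : Prop :=
  ∀ i j k l : Fin 4, i ≠ j → i ≠ k → i ≠ l → j ≠ k → j ≠ l → k ≠ l →
    ((1 : ℂ)/2) • cm (cm (C {i, j}) (C {j, k})) (cm (C {j, k}) (C {k, l})) =
      -((cm (C {i, j}) (C {j, l}) + cm (C {i, k}) (C {k, l})) * (C {j, k} - C {j} - C {k}))

/-- The Casimir-type element `w_{I,J,K}` of the Racah algebra. -/
def wElt (C : Finset (Fin 4) → A) (I J K : Finset (Fin 4)) : A :=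
  ((1 : ℂ)/4) • (cm (C (I ∪ J)) (C (J ∪ K))) ^ 2
  - ((1 : ℂ)/2) • acm ((C (I ∪ J)) ^ 2) (C (J ∪ K))
  - ((1 : ℂ)/2) • acm (C (I ∪ J)) ((C (J ∪ K)) ^ 2)
  + (C (I ∪ J)) ^ 2 + (C (J ∪ K)) ^ 2 + acm (C (I ∪ J)) (C (J ∪ K))
  + ((1 : ℂ)/2) • ((C I + C J + C K + C (I ∪ J ∪ K)) *
      (acm (C (I ∪ J)) (C (J ∪ K)) - 2 * C (I ∪ J) - 2 * C (J ∪ K)))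
  - (C I - C (I ∪ J ∪ K)) * (C J - C K) * C (I ∪ J)
  - (C I - C J) * (C (I ∪ J ∪ K) - C K) * C (J ∪ K)
  + (C I * C K - C (I ∪ J ∪ K) * C J) * (C (I ∪ J ∪ K) - C I + C J - C K)
  + (C I + C K) * (C (I ∪ J ∪ K) + C J)

set_option linter.unusedSimpArgs false

/-- Shifted two-index generators `P_{ij} = C_{ij} - C_i - C_j`. -/
def pGen (C : Finset (Fin 4) → A) (i j : Fin 4) : A := C {i, j} - C {i} - C {j}

/-- `F_{ijk} = (1/2)[C_{ij}, C_{jk}]`. -/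
def fGen (C : Finset (Fin 4) → A) (i j k : Fin 4) : A :=
  ((1 : ℂ)/2) • cm (C {i, j}) (C {j, k})

/-- The relations of `R(4)` in terms of the `c_i`, `P_{ij}`, `F_{ijk}`. -/
structure PRel (c : Fin 4 → A) (p : Fin 4 → Fin 4 → A) (f : Fin 4 → Fin 4 → Fin 4 → A) :
    Prop where
  cc : ∀ i j, c i * c j = c j * c i
  pc : ∀ i j k, p i j * c k = c k * p i j
  fc : ∀ i j k l, f i j k * c l = c l * f i j k
  psymm : ∀ i j, p j i = p i j
  fcyc : ∀ (i j k : Fin 4) (_ : i ≠ j ∧ i ≠ k ∧ j ≠ k := by decide), f j k i = f i j k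
  fanti : ∀ (i j k : Fin 4) (_ : i ≠ j ∧ i ≠ k ∧ j ≠ k := by decide), f j i k = - f i j k
  pp0 : ∀ (i j k l : Fin 4) (_ : i ≠ j ∧ i ≠ k ∧ i ≠ l ∧ j ≠ k ∧ j ≠ l ∧ k ≠ l := by decide),
    p i j * p k l = p k l * p i j
  pp : ∀ (i j k : Fin 4) (_ : i ≠ j ∧ i ≠ k ∧ j ≠ k := by decide),
    p i j * p j k = p j k * p i j + (2 : ℂ) • f i j k
  fp3 : ∀ (i j k : Fin 4) (_ : i ≠ j ∧ i ≠ k ∧ j ≠ k := by decide),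
    f i j k * p j k = p j k * f i j k
      - (p i k * p j k - p j k * p i j + (2 : ℂ) • (c j * p i k) - (2 : ℂ) • (c k * p i j))
  fp4 : ∀ (i j k l : Fin 4) (_ : i ≠ j ∧ i ≠ k ∧ i ≠ l ∧ j ≠ k ∧ j ≠ l ∧ k ≠ l := by decide),
    f i j k * p k l = p k l * f i j k - (p i k * p j l - p i l * p j k)
  ff : ∀ (i j k l : Fin 4) (_ : i ≠ j ∧ i ≠ k ∧ i ≠ l ∧ j ≠ k ∧ j ≠ l ∧ k ≠ l := by decide),
    f i j k * f j k l = f j k l * f i j k - (f i j l + f i k l) * p j k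

theorem three_set (C : Finset (Fin 4) → A) (h2 : RelR2 C) (i j k : Fin 4)
    (hij : i ≠ j) (hik : i ≠ k) (hjk : j ≠ k) :
    C {i, j, k} = C {i, j} + C {i, k} + C {j, k} - C {i} - C {j} - C {k} := by
  have hc : ({i, j, k} : Finset (Fin 4)).card = 3 := by
    rw [Finset.card_eq_three]; exact ⟨i, j, k, hij, hik, hjk, rfl⟩
  have h := h2 {i, j, k} (by rw [hc])
  have e1 : ({i, j, k} : Finset (Fin 4)) \ {i} = {j, k} := by
    ext x; simp; grind
  have e2 : ({i, j, k} : Finset (Fin 4)) \ {j} = {i, k} := by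
    ext x; simp; grind
  have e3 : ({i, j, k} : Finset (Fin 4)) \ {k} = {i, j} := by
    ext x; simp; grind
  rw [hc, Finset.sum_insert (by simp [hij, hik]), Finset.sum_insert (by simp [hjk]),
    Finset.sum_singleton, e1, e2, e3, Finset.sum_pair hjk, Finset.sum_pair hik,
    Finset.sum_pair hij, Finset.sum_insert (by simp [hij, hik]),
    Finset.sum_insert (by simp [hjk]), Finset.sum_singleton,
    Finset.pair_comm j i, Finset.pair_comm k i, Finset.pair_comm k j] at h
  rw [h]
  push_cast
  module

theorem four_set (C : Finset (Fin 4) → A) (h2 : RelR2 C) :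
    C {0, 1, 2, 3} = C {0, 1} + C {0, 2} + C {0, 3} + C {1, 2} + C {1, 3} + C {2, 3}
      - (2 : ℂ) • (C {0} + C {1} + C {2} + C {3}) := by
  have hc : ({0, 1, 2, 3} : Finset (Fin 4)).card = 4 := by decide
  have h := h2 {0, 1, 2, 3} (by rw [hc]; norm_num)
  have e0 : ({0, 1, 2, 3} : Finset (Fin 4)) \ {0} = {1, 2, 3} := by decide
  have e1 : ({0, 1, 2, 3} : Finset (Fin 4)) \ {1} = {0, 2, 3} := by decide
  have e2 : ({0, 1, 2, 3} : Finset (Fin 4)) \ {2} = {0, 1, 3} := by decide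
  have e3 : ({0, 1, 2, 3} : Finset (Fin 4)) \ {3} = {0, 1, 2} := by decide
  have s4 : ∀ g : Fin 4 → A, ∑ i ∈ ({0, 1, 2, 3} : Finset (Fin 4)), g i
      = g 0 + g 1 + g 2 + g 3 := by
    intro g
    rw [show ({0, 1, 2, 3} : Finset (Fin 4)) = Finset.univ by decide, Fin.sum_univ_four]
  have s3 : ∀ (g : Fin 4 → A) (i j k : Fin 4), i ≠ j → i ≠ k → j ≠ k →
      ∑ i ∈ ({i, j, k} : Finset (Fin 4)), g i = g i + g j + g k := by
    intro g i j k hij hik hjk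
    rw [Finset.sum_insert (by simp [hij, hik]), Finset.sum_pair hjk, add_assoc]
  rw [hc, s4, s4, e0, e1, e2, e3, s3 _ 1 2 3 (by decide) (by decide) (by decide),
    s3 _ 0 2 3 (by decide) (by decide) (by decide), s3 _ 0 1 3 (by decide) (by decide) (by decide),
    s3 _ 0 1 2 (by decide) (by decide) (by decide),
    Finset.pair_comm 1 0, Finset.pair_comm 2 0, Finset.pair_comm 3 0,
    Finset.pair_comm 2 1, Finset.pair_comm 3 1, Finset.pair_comm 3 2] at h
  rw [h]
  push_cast
  module

theorem prel_of_rels (C : Finset (Fin 4) → A)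
    (h1 : RelR1 C) (h2 : RelR2 C) (h3 : RelR3 C) (h4 : RelR4 C) (h5 : RelR5 C) :
    PRel (fun i => C {i}) (pGen C) (fGen C) := by
  have cS : ∀ (S : Finset (Fin 4)) (k : Fin 4), C S * C {k} = C {k} * C S := by
    intro S k
    refine sub_eq_zero.mp (h1 S {k} ?_)
    by_cases hk : k ∈ S
    · right; right; simpa using hk
    · left; ext x; simp; rintro hx rfl; exact hk hx
  have cc : ∀ i j, C {i} * C {j} = C {j} * C {i} := fun i j => cS _ _
  have pc : ∀ i j k, C {i, j} * C {k} = C {k} * C {i, j} := fun i j k => cS _ _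
  have cc' : ∀ i j z, C {i} * (C {j} * z) = C {j} * (C {i} * z) := fun i j z => by
    rw [← mul_assoc, cc, mul_assoc]
  have pc' : ∀ i j k z, C {i, j} * (C {k} * z) = C {k} * (C {i, j} * z) := fun i j k z => by
    rw [← mul_assoc, pc, mul_assoc]
  have psymm : ∀ i j, pGen C j i = pGen C i j := fun i j => by
    unfold pGen; rw [Finset.pair_comm]; abel
  -- commutators of shifted generators
  have pcm : ∀ i j k l, pGen C i j * pGen C k l - pGen C k l * pGen C i j
      = cm (C {i, j}) (C {k, l}) := fun i j k l => by
    simp only [pGen, cm, mul_sub, sub_mul, pc, cc]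
    abel
  have r3 := fun i j k (hij : i ≠ j) (hik : i ≠ k) (hjk : j ≠ k) =>
    h3 {i} {j} {k} (by simp) (by simp) (by simp) (by simpa using hij) (by simpa using hjk)
      (by simpa using hik)
  have u2 : ∀ i j : Fin 4, ({i} ∪ {j} : Finset (Fin 4)) = {i, j} := fun i j => rfl
  have u3 : ∀ i j k : Fin 4, ({i, j} ∪ {k} : Finset (Fin 4)) = {i, j, k} := fun i j k => by
    ext x; simp
  simp only [u2, u3] at r3
  have f2 : ∀ i j k, (2 : ℂ) • fGen C i j k = cm (C {i, j}) (C {j, k}) := fun i j k => by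
    unfold fGen; rw [smul_smul]; norm_num
  have fcyc : ∀ i j k, i ≠ j → i ≠ k → j ≠ k → fGen C j k i = fGen C i j k := by
    intro i j k hij hik hjk
    have h := (r3 i j k hij hik hjk).1
    unfold fGen
    rw [h, Finset.pair_comm k i]
  have fp_aux : ∀ i j k a b, pGen C a b * fGen C i j k - fGen C i j k * pGen C a b
      = ((1 : ℂ)/2) • cm (C {a, b}) (cm (C {i, j}) (C {j, k})) := by
    intro i j k a b
    simp only [pGen, fGen, cm, mul_sub, sub_mul, smul_sub, mul_assoc, pc, cc, pc', cc',
      mul_smul_comm, smul_mul_assoc]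
    module
  refine ⟨cc, ?_, ?_, psymm, fun i j k h => fcyc i j k h.1 h.2.1 h.2.2, ?_, ?_, ?_, ?_, ?_, ?_⟩
  · intro i j k
    simp only [pGen, sub_mul, mul_sub, pc, cc]
  · intro i j k l
    simp only [fGen, cm, smul_mul_assoc, mul_smul_comm, sub_mul, mul_sub, mul_assoc, pc, pc']
  · rintro i j k ⟨hij, hik, hjk⟩
    have h := (r3 i j k hij hik hjk).2.1
    have h' := (r3 i j k hij hik hjk).1
    unfold fGen
    rw [h', h, Finset.pair_comm j i, ← smul_neg]
    simp [cm]
  · rintro i j k l ⟨hij, hik, hil, hjk, hjl, hkl⟩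
    have h := pcm i j k l
    rw [h1 {i, j} {k, l} (by left; ext x; simp; grind)] at h
    exact sub_eq_zero.mp h
  · rintro i j k ⟨hij, hik, hjk⟩
    rw [f2, ← pcm]; abel
  · rintro i j k ⟨hij, hik, hjk⟩
    have h := (r3 i j k hij hik hjk).2.2
    have h' := fp_aux i j k j k
    rw [h, three_set C h2 i j k hij hik hjk] at h'
    rw [eq_sub_iff_add_eq, ← eq_sub_iff_add_eq', h']
    simp only [pGen, two_mul, mul_sub, sub_mul, mul_add, add_mul, smul_sub, smul_add, mul_assoc,
      pc, cc, pc', cc']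
    module
  · rintro i j k l ⟨hij, hik, hil, hjk, hjl, hkl⟩
    have h := h4 i j k l hij hik hil hjk hjl hkl
    have h' := fp_aux i j k k l
    rw [h] at h'
    rw [eq_sub_iff_add_eq, ← eq_sub_iff_add_eq', h']
    simp only [pGen, two_mul, mul_sub, sub_mul, mul_add, add_mul, smul_sub, smul_add, mul_assoc,
      pc, cc, pc', cc']
    module
  · rintro i j k l ⟨hij, hik, hil, hjk, hjl, hkl⟩
    have h := h5 i j k l hij hik hil hjk hjl hkl
    have h' : fGen C i j k * fGen C j k l - fGen C j k l * fGen C i j k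
      = ((1 : ℂ)/2) • ((1 : ℂ)/2) • cm (cm (C {i, j}) (C {j, k})) (cm (C {j, k}) (C {k, l})) := by
      rw [cm]; simp only [fGen, mul_smul_comm, smul_mul_assoc, smul_sub]
    rw [h, ← f2, ← f2] at h'
    rw [eq_sub_iff_add_eq, ← eq_sub_iff_add_eq', ← sub_eq_zero]
    rw [← sub_eq_zero] at h'
    rw [← h']
    simp only [pGen, mul_sub, sub_mul, add_mul, smul_mul_assoc]
    module

section normalOrder

variable {c : Fin 4 → A} {p : Fin 4 → Fin 4 → A} {f : Fin 4 → Fin 4 → Fin 4 → A}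

theorem PRel.ps (R : PRel c p f) :
    (p 1 0 = p 0 1) ∧
    (p 2 0 = p 0 2) ∧
    (p 3 0 = p 0 3) ∧
    (p 2 1 = p 1 2) ∧
    (p 3 1 = p 1 3) ∧
    (p 3 2 = p 2 3) :=
  ⟨R.psymm 0 1, R.psymm 0 2, R.psymm 0 3, R.psymm 1 2, R.psymm 1 3, R.psymm 2 3⟩

theorem PRel.fs (R : PRel c p f) :
    (f 1 2 0 = f 0 1 2) ∧
    (f 2 0 1 = f 0 1 2) ∧
    (f 1 0 2 = - f 0 1 2) ∧
    (f 0 2 1 = - f 0 1 2) ∧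
    (f 2 1 0 = - f 0 1 2) ∧
    (f 1 3 0 = f 0 1 3) ∧
    (f 3 0 1 = f 0 1 3) ∧
    (f 1 0 3 = - f 0 1 3) ∧
    (f 0 3 1 = - f 0 1 3) ∧
    (f 3 1 0 = - f 0 1 3) ∧
    (f 2 3 0 = f 0 2 3) ∧
    (f 3 0 2 = f 0 2 3) ∧
    (f 2 0 3 = - f 0 2 3) ∧
    (f 0 3 2 = - f 0 2 3) ∧
    (f 3 2 0 = - f 0 2 3) ∧
    (f 2 3 1 = f 1 2 3) ∧
    (f 3 1 2 = f 1 2 3) ∧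
    (f 2 1 3 = - f 1 2 3) ∧
    (f 1 3 2 = - f 1 2 3) ∧
    (f 3 2 1 = - f 1 2 3) := by
  refine ⟨?_, ?_, ?_, ?_, ?_, ?_, ?_, ?_, ?_, ?_, ?_, ?_, ?_, ?_, ?_, ?_, ?_, ?_, ?_, ?_⟩
  · exact R.fcyc 0 1 2
  · exact (R.fcyc 1 2 0).trans (R.fcyc 0 1 2)
  · exact R.fanti 0 1 2
  · exact ((R.fcyc 1 0 2).trans (R.fanti 0 1 2))
  · exact ((R.fcyc 0 2 1).trans ((R.fcyc 1 0 2).trans (R.fanti 0 1 2)))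
  · exact R.fcyc 0 1 3
  · exact (R.fcyc 1 3 0).trans (R.fcyc 0 1 3)
  · exact R.fanti 0 1 3
  · exact ((R.fcyc 1 0 3).trans (R.fanti 0 1 3))
  · exact ((R.fcyc 0 3 1).trans ((R.fcyc 1 0 3).trans (R.fanti 0 1 3)))
  · exact R.fcyc 0 2 3
  · exact (R.fcyc 2 3 0).trans (R.fcyc 0 2 3)
  · exact R.fanti 0 2 3
  · exact ((R.fcyc 2 0 3).trans (R.fanti 0 2 3))
  · exact ((R.fcyc 0 3 2).trans ((R.fcyc 2 0 3).trans (R.fanti 0 2 3)))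
  · exact R.fcyc 1 2 3
  · exact (R.fcyc 2 3 1).trans (R.fcyc 1 2 3)
  · exact R.fanti 1 2 3
  · exact ((R.fcyc 2 1 3).trans (R.fanti 1 2 3))
  · exact ((R.fcyc 1 3 2).trans ((R.fcyc 2 1 3).trans (R.fanti 1 2 3)))

theorem PRel.cen (R : PRel c p f) :
    (c 1 * c 0 = c 0 * c 1) ∧
    (c 2 * c 0 = c 0 * c 2) ∧
    (c 3 * c 0 = c 0 * c 3) ∧
    (c 2 * c 1 = c 1 * c 2) ∧
    (c 3 * c 1 = c 1 * c 3) ∧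
    (c 3 * c 2 = c 2 * c 3) :=
  ⟨R.cc 1 0, R.cc 2 0, R.cc 3 0, R.cc 2 1, R.cc 3 1, R.cc 3 2⟩

theorem PRel.cen' (R : PRel c p f) (z : A) :
    (c 1 * (c 0 * z) = c 0 * (c 1 * z)) ∧
    (c 2 * (c 0 * z) = c 0 * (c 2 * z)) ∧
    (c 3 * (c 0 * z) = c 0 * (c 3 * z)) ∧
    (c 2 * (c 1 * z) = c 1 * (c 2 * z)) ∧
    (c 3 * (c 1 * z) = c 1 * (c 3 * z)) ∧
    (c 3 * (c 2 * z) = c 2 * (c 3 * z)) := by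
  simp only [← mul_assoc, R.cen, and_self]

theorem PRel.pc' (R : PRel c p f) (i j k : Fin 4) (z : A) :
    p i j * (c k * z) = c k * (p i j * z) := by
  simp only [← mul_assoc, R.pc]

theorem PRel.fc' (R : PRel c p f) (i j k l : Fin 4) (z : A) :
    f i j k * (c l * z) = c l * (f i j k * z) := by
  simp only [← mul_assoc, R.fc]

theorem PRel.op (R : PRel c p f) :
    (p 0 2 * p 0 1 = p 0 1 * p 0 2 + (2 : ℂ) • (f 0 1 2)) ∧
    (p 0 3 * p 0 1 = p 0 1 * p 0 3 + (2 : ℂ) • (f 0 1 3)) ∧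
    (p 1 2 * p 0 1 = p 0 1 * p 1 2 - (2 : ℂ) • (f 0 1 2)) ∧
    (p 1 3 * p 0 1 = p 0 1 * p 1 3 - (2 : ℂ) • (f 0 1 3)) ∧
    (p 2 3 * p 0 1 = p 0 1 * p 2 3) ∧
    (p 0 3 * p 0 2 = p 0 2 * p 0 3 + (2 : ℂ) • (f 0 2 3)) ∧
    (p 1 2 * p 0 2 = p 0 2 * p 1 2 + (2 : ℂ) • (f 0 1 2)) ∧
    (p 1 3 * p 0 2 = p 0 2 * p 1 3) ∧
    (p 2 3 * p 0 2 = p 0 2 * p 2 3 - (2 : ℂ) • (f 0 2 3)) ∧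
    (p 1 2 * p 0 3 = p 0 3 * p 1 2) ∧
    (p 1 3 * p 0 3 = p 0 3 * p 1 3 + (2 : ℂ) • (f 0 1 3)) ∧
    (p 2 3 * p 0 3 = p 0 3 * p 2 3 + (2 : ℂ) • (f 0 2 3)) ∧
    (p 1 3 * p 1 2 = p 1 2 * p 1 3 + (2 : ℂ) • (f 1 2 3)) ∧
    (p 2 3 * p 1 2 = p 1 2 * p 2 3 - (2 : ℂ) • (f 1 2 3)) ∧
    (p 2 3 * p 1 3 = p 1 3 * p 2 3 + (2 : ℂ) • (f 1 2 3)) := by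
  refine ⟨?_, ?_, ?_, ?_, ?_, ?_, ?_, ?_, ?_, ?_, ?_, ?_, ?_, ?_, ?_⟩
  · simpa only [R.ps, R.fs, smul_neg, ← sub_eq_add_neg] using R.pp 2 0 1
  · simpa only [R.ps, R.fs, smul_neg, ← sub_eq_add_neg] using R.pp 3 0 1
  · simpa only [R.ps, R.fs, smul_neg, ← sub_eq_add_neg] using R.pp 2 1 0
  · simpa only [R.ps, R.fs, smul_neg, ← sub_eq_add_neg] using R.pp 3 1 0
  · exact R.pp0 2 3 0 1
  · simpa only [R.ps, R.fs, smul_neg, ← sub_eq_add_neg] using R.pp 3 0 2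
  · simpa only [R.ps, R.fs, smul_neg, ← sub_eq_add_neg] using R.pp 1 2 0
  · exact R.pp0 1 3 0 2
  · simpa only [R.ps, R.fs, smul_neg, ← sub_eq_add_neg] using R.pp 3 2 0
  · exact R.pp0 1 2 0 3
  · simpa only [R.ps, R.fs, smul_neg, ← sub_eq_add_neg] using R.pp 1 3 0
  · simpa only [R.ps, R.fs, smul_neg, ← sub_eq_add_neg] using R.pp 2 3 0
  · simpa only [R.ps, R.fs, smul_neg, ← sub_eq_add_neg] using R.pp 3 1 2
  · simpa only [R.ps, R.fs, smul_neg, ← sub_eq_add_neg] using R.pp 3 2 1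
  · simpa only [R.ps, R.fs, smul_neg, ← sub_eq_add_neg] using R.pp 2 3 1

theorem PRel.op' (R : PRel c p f) (z : A) :
    (p 0 2 * (p 0 1 * z) = p 0 1 * (p 0 2 * z) + (2 : ℂ) • (f 0 1 2 * z)) ∧
    (p 0 3 * (p 0 1 * z) = p 0 1 * (p 0 3 * z) + (2 : ℂ) • (f 0 1 3 * z)) ∧
    (p 1 2 * (p 0 1 * z) = p 0 1 * (p 1 2 * z) - (2 : ℂ) • (f 0 1 2 * z)) ∧
    (p 1 3 * (p 0 1 * z) = p 0 1 * (p 1 3 * z) - (2 : ℂ) • (f 0 1 3 * z)) ∧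
    (p 2 3 * (p 0 1 * z) = p 0 1 * (p 2 3 * z)) ∧
    (p 0 3 * (p 0 2 * z) = p 0 2 * (p 0 3 * z) + (2 : ℂ) • (f 0 2 3 * z)) ∧
    (p 1 2 * (p 0 2 * z) = p 0 2 * (p 1 2 * z) + (2 : ℂ) • (f 0 1 2 * z)) ∧
    (p 1 3 * (p 0 2 * z) = p 0 2 * (p 1 3 * z)) ∧
    (p 2 3 * (p 0 2 * z) = p 0 2 * (p 2 3 * z) - (2 : ℂ) • (f 0 2 3 * z)) ∧
    (p 1 2 * (p 0 3 * z) = p 0 3 * (p 1 2 * z)) ∧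
    (p 1 3 * (p 0 3 * z) = p 0 3 * (p 1 3 * z) + (2 : ℂ) • (f 0 1 3 * z)) ∧
    (p 2 3 * (p 0 3 * z) = p 0 3 * (p 2 3 * z) + (2 : ℂ) • (f 0 2 3 * z)) ∧
    (p 1 3 * (p 1 2 * z) = p 1 2 * (p 1 3 * z) + (2 : ℂ) • (f 1 2 3 * z)) ∧
    (p 2 3 * (p 1 2 * z) = p 1 2 * (p 2 3 * z) - (2 : ℂ) • (f 1 2 3 * z)) ∧
    (p 2 3 * (p 1 3 * z) = p 1 3 * (p 2 3 * z) + (2 : ℂ) • (f 1 2 3 * z)) := by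
  simp only [← mul_assoc, R.op]
  simp only [add_mul, sub_mul, smul_mul_assoc, and_self]

theorem PRel.of (R : PRel c p f) :
    (f 0 1 2 * p 0 1 = p 0 1 * f 0 1 2 - (2 : ℂ) • (c 0 * p 1 2) + (2 : ℂ) • (c 1 * p 0 2) + p 0 1 * p 0 2 + (2 : ℂ) • (f 0 1 2) - p 0 1 * p 1 2) ∧
    (f 0 1 2 * p 0 2 = p 0 2 * f 0 1 2 + (2 : ℂ) • (c 0 * p 1 2) - (2 : ℂ) • (c 2 * p 0 1) - p 0 1 * p 0 2 + p 0 2 * p 1 2) ∧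
    (f 0 1 2 * p 0 3 = p 0 3 * f 0 1 2 + p 0 2 * p 1 3 - p 0 1 * p 2 3) ∧
    (f 0 1 2 * p 1 2 = p 1 2 * f 0 1 2 - (2 : ℂ) • (c 1 * p 0 2) + (2 : ℂ) • (c 2 * p 0 1) - (2 : ℂ) • (f 0 1 2) + p 0 1 * p 1 2 - p 0 2 * p 1 2) ∧
    (f 0 1 2 * p 1 3 = p 1 3 * f 0 1 2 - p 0 3 * p 1 2 + p 0 1 * p 2 3) ∧
    (f 0 1 2 * p 2 3 = p 2 3 * f 0 1 2 + p 0 3 * p 1 2 - p 0 2 * p 1 3) ∧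
    (f 0 1 3 * p 0 1 = p 0 1 * f 0 1 3 - (2 : ℂ) • (c 0 * p 1 3) + (2 : ℂ) • (c 1 * p 0 3) + p 0 1 * p 0 3 + (2 : ℂ) • (f 0 1 3) - p 0 1 * p 1 3) ∧
    (f 0 1 3 * p 0 2 = p 0 2 * f 0 1 3 + p 0 3 * p 1 2 - p 0 1 * p 2 3) ∧
    (f 0 1 3 * p 0 3 = p 0 3 * f 0 1 3 + (2 : ℂ) • (c 0 * p 1 3) - (2 : ℂ) • (c 3 * p 0 1) - p 0 1 * p 0 3 + p 0 3 * p 1 3) ∧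
    (f 0 1 3 * p 1 2 = p 1 2 * f 0 1 3 - p 0 2 * p 1 3 + p 0 1 * p 2 3) ∧
    (f 0 1 3 * p 1 3 = p 1 3 * f 0 1 3 - (2 : ℂ) • (c 1 * p 0 3) + (2 : ℂ) • (c 3 * p 0 1) - (2 : ℂ) • (f 0 1 3) + p 0 1 * p 1 3 - p 0 3 * p 1 3) ∧
    (f 0 1 3 * p 2 3 = p 2 3 * f 0 1 3 + p 0 2 * p 1 3 - p 0 3 * p 1 2) ∧
    (f 0 2 3 * p 0 1 = p 0 1 * f 0 2 3 + p 0 3 * p 1 2 - p 0 2 * p 1 3) ∧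
    (f 0 2 3 * p 0 2 = p 0 2 * f 0 2 3 - (2 : ℂ) • (c 0 * p 2 3) + (2 : ℂ) • (c 2 * p 0 3) + p 0 2 * p 0 3 + (2 : ℂ) • (f 0 2 3) - p 0 2 * p 2 3) ∧
    (f 0 2 3 * p 0 3 = p 0 3 * f 0 2 3 + (2 : ℂ) • (c 0 * p 2 3) - (2 : ℂ) • (c 3 * p 0 2) - p 0 2 * p 0 3 + p 0 3 * p 2 3) ∧
    (f 0 2 3 * p 1 2 = p 1 2 * f 0 2 3 - p 0 1 * p 2 3 + p 0 2 * p 1 3) ∧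
    (f 0 2 3 * p 1 3 = p 1 3 * f 0 2 3 + p 0 1 * p 2 3 - p 0 3 * p 1 2) ∧
    (f 0 2 3 * p 2 3 = p 2 3 * f 0 2 3 - (2 : ℂ) • (c 2 * p 0 3) + (2 : ℂ) • (c 3 * p 0 2) - (2 : ℂ) • (f 0 2 3) + p 0 2 * p 2 3 - p 0 3 * p 2 3) ∧
    (f 1 2 3 * p 0 1 = p 0 1 * f 1 2 3 + p 0 2 * p 1 3 - p 0 3 * p 1 2) ∧
    (f 1 2 3 * p 0 2 = p 0 2 * f 1 2 3 - p 0 1 * p 2 3 + p 0 3 * p 1 2) ∧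
    (f 1 2 3 * p 0 3 = p 0 3 * f 1 2 3 + p 0 1 * p 2 3 - p 0 2 * p 1 3) ∧
    (f 1 2 3 * p 1 2 = p 1 2 * f 1 2 3 - (2 : ℂ) • (c 1 * p 2 3) + (2 : ℂ) • (c 2 * p 1 3) + p 1 2 * p 1 3 + (2 : ℂ) • (f 1 2 3) - p 1 2 * p 2 3) ∧
    (f 1 2 3 * p 1 3 = p 1 3 * f 1 2 3 + (2 : ℂ) • (c 1 * p 2 3) - (2 : ℂ) • (c 3 * p 1 2) - p 1 2 * p 1 3 + p 1 3 * p 2 3) ∧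
    (f 1 2 3 * p 2 3 = p 2 3 * f 1 2 3 - (2 : ℂ) • (c 2 * p 1 3) + (2 : ℂ) • (c 3 * p 1 2) - (2 : ℂ) • (f 1 2 3) + p 1 2 * p 2 3 - p 1 3 * p 2 3) := by
  refine ⟨?_, ?_, ?_, ?_, ?_, ?_, ?_, ?_, ?_, ?_, ?_, ?_, ?_, ?_, ?_, ?_, ?_, ?_, ?_, ?_, ?_, ?_, ?_, ?_⟩
  · have h := R.fp3 2 0 1
    try simp only [R.ps, R.fs, neg_mul, mul_neg, R.op] at h
    linear_combination (norm := module) (1 : ℂ) • h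
  · have h := R.fp3 1 0 2
    try simp only [R.ps, R.fs, neg_mul, mul_neg, R.op] at h
    linear_combination (norm := module) (-1 : ℂ) • h
  · have h := R.fp4 1 2 0 3
    try simp only [R.ps, R.fs, neg_mul, mul_neg, R.op] at h
    linear_combination (norm := module) (1 : ℂ) • h
  · have h := R.fp3 0 1 2
    try simp only [R.ps, R.fs, neg_mul, mul_neg, R.op] at h
    linear_combination (norm := module) (1 : ℂ) • h
  · have h := R.fp4 0 2 1 3
    try simp only [R.ps, R.fs, neg_mul, mul_neg, R.op] at h
    linear_combination (norm := module) (-1 : ℂ) • h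
  · have h := R.fp4 0 1 2 3
    try simp only [R.ps, R.fs, neg_mul, mul_neg, R.op] at h
    linear_combination (norm := module) (1 : ℂ) • h
  · have h := R.fp3 3 0 1
    try simp only [R.ps, R.fs, neg_mul, mul_neg, R.op] at h
    linear_combination (norm := module) (1 : ℂ) • h
  · have h := R.fp4 1 3 0 2
    try simp only [R.ps, R.fs, neg_mul, mul_neg, R.op] at h
    linear_combination (norm := module) (1 : ℂ) • h
  · have h := R.fp3 1 0 3
    try simp only [R.ps, R.fs, neg_mul, mul_neg, R.op] at h
    linear_combination (norm := module) (-1 : ℂ) • h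
  · have h := R.fp4 0 3 1 2
    try simp only [R.ps, R.fs, neg_mul, mul_neg, R.op] at h
    linear_combination (norm := module) (-1 : ℂ) • h
  · have h := R.fp3 0 1 3
    try simp only [R.ps, R.fs, neg_mul, mul_neg, R.op] at h
    linear_combination (norm := module) (1 : ℂ) • h
  · have h := R.fp4 0 1 3 2
    try simp only [R.ps, R.fs, neg_mul, mul_neg, R.op] at h
    linear_combination (norm := module) (1 : ℂ) • h
  · have h := R.fp4 2 3 0 1
    try simp only [R.ps, R.fs, neg_mul, mul_neg, R.op] at h
    linear_combination (norm := module) (1 : ℂ) • h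
  · have h := R.fp3 3 0 2
    try simp only [R.ps, R.fs, neg_mul, mul_neg, R.op] at h
    linear_combination (norm := module) (1 : ℂ) • h
  · have h := R.fp3 2 0 3
    try simp only [R.ps, R.fs, neg_mul, mul_neg, R.op] at h
    linear_combination (norm := module) (-1 : ℂ) • h
  · have h := R.fp4 0 3 2 1
    try simp only [R.ps, R.fs, neg_mul, mul_neg, R.op] at h
    linear_combination (norm := module) (-1 : ℂ) • h
  · have h := R.fp4 0 2 3 1
    try simp only [R.ps, R.fs, neg_mul, mul_neg, R.op] at h
    linear_combination (norm := module) (1 : ℂ) • h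
  · have h := R.fp3 0 2 3
    try simp only [R.ps, R.fs, neg_mul, mul_neg, R.op] at h
    linear_combination (norm := module) (1 : ℂ) • h
  · have h := R.fp4 2 3 1 0
    try simp only [R.ps, R.fs, neg_mul, mul_neg, R.op] at h
    linear_combination (norm := module) (1 : ℂ) • h
  · have h := R.fp4 1 3 2 0
    try simp only [R.ps, R.fs, neg_mul, mul_neg, R.op] at h
    linear_combination (norm := module) (-1 : ℂ) • h
  · have h := R.fp4 1 2 3 0
    try simp only [R.ps, R.fs, neg_mul, mul_neg, R.op] at h
    linear_combination (norm := module) (1 : ℂ) • h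
  · have h := R.fp3 3 1 2
    try simp only [R.ps, R.fs, neg_mul, mul_neg, R.op] at h
    linear_combination (norm := module) (1 : ℂ) • h
  · have h := R.fp3 2 1 3
    try simp only [R.ps, R.fs, neg_mul, mul_neg, R.op] at h
    linear_combination (norm := module) (-1 : ℂ) • h
  · have h := R.fp3 1 2 3
    try simp only [R.ps, R.fs, neg_mul, mul_neg, R.op] at h
    linear_combination (norm := module) (1 : ℂ) • h

theorem PRel.of' (R : PRel c p f) (z : A) :
    (f 0 1 2 * (p 0 1 * z) = p 0 1 * (f 0 1 2 * z) - (2 : ℂ) • (c 0 * (p 1 2 * z)) + (2 : ℂ) • (c 1 * (p 0 2 * z)) + p 0 1 * (p 0 2 * z) + (2 : ℂ) • (f 0 1 2 * z) - p 0 1 * (p 1 2 * z)) ∧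
    (f 0 1 2 * (p 0 2 * z) = p 0 2 * (f 0 1 2 * z) + (2 : ℂ) • (c 0 * (p 1 2 * z)) - (2 : ℂ) • (c 2 * (p 0 1 * z)) - p 0 1 * (p 0 2 * z) + p 0 2 * (p 1 2 * z)) ∧
    (f 0 1 2 * (p 0 3 * z) = p 0 3 * (f 0 1 2 * z) + p 0 2 * (p 1 3 * z) - p 0 1 * (p 2 3 * z)) ∧
    (f 0 1 2 * (p 1 2 * z) = p 1 2 * (f 0 1 2 * z) - (2 : ℂ) • (c 1 * (p 0 2 * z)) + (2 : ℂ) • (c 2 * (p 0 1 * z)) - (2 : ℂ) • (f 0 1 2 * z) + p 0 1 * (p 1 2 * z) - p 0 2 * (p 1 2 * z)) ∧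
    (f 0 1 2 * (p 1 3 * z) = p 1 3 * (f 0 1 2 * z) - p 0 3 * (p 1 2 * z) + p 0 1 * (p 2 3 * z)) ∧
    (f 0 1 2 * (p 2 3 * z) = p 2 3 * (f 0 1 2 * z) + p 0 3 * (p 1 2 * z) - p 0 2 * (p 1 3 * z)) ∧
    (f 0 1 3 * (p 0 1 * z) = p 0 1 * (f 0 1 3 * z) - (2 : ℂ) • (c 0 * (p 1 3 * z)) + (2 : ℂ) • (c 1 * (p 0 3 * z)) + p 0 1 * (p 0 3 * z) + (2 : ℂ) • (f 0 1 3 * z) - p 0 1 * (p 1 3 * z)) ∧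
    (f 0 1 3 * (p 0 2 * z) = p 0 2 * (f 0 1 3 * z) + p 0 3 * (p 1 2 * z) - p 0 1 * (p 2 3 * z)) ∧
    (f 0 1 3 * (p 0 3 * z) = p 0 3 * (f 0 1 3 * z) + (2 : ℂ) • (c 0 * (p 1 3 * z)) - (2 : ℂ) • (c 3 * (p 0 1 * z)) - p 0 1 * (p 0 3 * z) + p 0 3 * (p 1 3 * z)) ∧
    (f 0 1 3 * (p 1 2 * z) = p 1 2 * (f 0 1 3 * z) - p 0 2 * (p 1 3 * z) + p 0 1 * (p 2 3 * z)) ∧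
    (f 0 1 3 * (p 1 3 * z) = p 1 3 * (f 0 1 3 * z) - (2 : ℂ) • (c 1 * (p 0 3 * z)) + (2 : ℂ) • (c 3 * (p 0 1 * z)) - (2 : ℂ) • (f 0 1 3 * z) + p 0 1 * (p 1 3 * z) - p 0 3 * (p 1 3 * z)) ∧
    (f 0 1 3 * (p 2 3 * z) = p 2 3 * (f 0 1 3 * z) + p 0 2 * (p 1 3 * z) - p 0 3 * (p 1 2 * z)) ∧
    (f 0 2 3 * (p 0 1 * z) = p 0 1 * (f 0 2 3 * z) + p 0 3 * (p 1 2 * z) - p 0 2 * (p 1 3 * z)) ∧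
    (f 0 2 3 * (p 0 2 * z) = p 0 2 * (f 0 2 3 * z) - (2 : ℂ) • (c 0 * (p 2 3 * z)) + (2 : ℂ) • (c 2 * (p 0 3 * z)) + p 0 2 * (p 0 3 * z) + (2 : ℂ) • (f 0 2 3 * z) - p 0 2 * (p 2 3 * z)) ∧
    (f 0 2 3 * (p 0 3 * z) = p 0 3 * (f 0 2 3 * z) + (2 : ℂ) • (c 0 * (p 2 3 * z)) - (2 : ℂ) • (c 3 * (p 0 2 * z)) - p 0 2 * (p 0 3 * z) + p 0 3 * (p 2 3 * z)) ∧
    (f 0 2 3 * (p 1 2 * z) = p 1 2 * (f 0 2 3 * z) - p 0 1 * (p 2 3 * z) + p 0 2 * (p 1 3 * z)) ∧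
    (f 0 2 3 * (p 1 3 * z) = p 1 3 * (f 0 2 3 * z) + p 0 1 * (p 2 3 * z) - p 0 3 * (p 1 2 * z)) ∧
    (f 0 2 3 * (p 2 3 * z) = p 2 3 * (f 0 2 3 * z) - (2 : ℂ) • (c 2 * (p 0 3 * z)) + (2 : ℂ) • (c 3 * (p 0 2 * z)) - (2 : ℂ) • (f 0 2 3 * z) + p 0 2 * (p 2 3 * z) - p 0 3 * (p 2 3 * z)) ∧
    (f 1 2 3 * (p 0 1 * z) = p 0 1 * (f 1 2 3 * z) + p 0 2 * (p 1 3 * z) - p 0 3 * (p 1 2 * z)) ∧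
    (f 1 2 3 * (p 0 2 * z) = p 0 2 * (f 1 2 3 * z) - p 0 1 * (p 2 3 * z) + p 0 3 * (p 1 2 * z)) ∧
    (f 1 2 3 * (p 0 3 * z) = p 0 3 * (f 1 2 3 * z) + p 0 1 * (p 2 3 * z) - p 0 2 * (p 1 3 * z)) ∧
    (f 1 2 3 * (p 1 2 * z) = p 1 2 * (f 1 2 3 * z) - (2 : ℂ) • (c 1 * (p 2 3 * z)) + (2 : ℂ) • (c 2 * (p 1 3 * z)) + p 1 2 * (p 1 3 * z) + (2 : ℂ) • (f 1 2 3 * z) - p 1 2 * (p 2 3 * z)) ∧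
    (f 1 2 3 * (p 1 3 * z) = p 1 3 * (f 1 2 3 * z) + (2 : ℂ) • (c 1 * (p 2 3 * z)) - (2 : ℂ) • (c 3 * (p 1 2 * z)) - p 1 2 * (p 1 3 * z) + p 1 3 * (p 2 3 * z)) ∧
    (f 1 2 3 * (p 2 3 * z) = p 2 3 * (f 1 2 3 * z) - (2 : ℂ) • (c 2 * (p 1 3 * z)) + (2 : ℂ) • (c 3 * (p 1 2 * z)) - (2 : ℂ) • (f 1 2 3 * z) + p 1 2 * (p 2 3 * z) - p 1 3 * (p 2 3 * z)) := by
  simp only [← mul_assoc, R.of]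
  simp only [add_mul, sub_mul, smul_mul_assoc, and_self]
theorem PRel.og (R : PRel c p f) :
    (f 0 1 3 * f 0 1 2 = -(p 0 1 * f 0 2 3) - p 0 1 * f 1 2 3 + f 0 1 2 * f 0 1 3) ∧
    (f 0 2 3 * f 0 1 2 = p 0 2 * f 0 1 3 - p 0 2 * f 1 2 3 + f 0 1 2 * f 0 2 3) ∧
    (f 1 2 3 * f 0 1 2 = p 1 2 * f 0 1 3 + p 1 2 * f 0 2 3 + f 0 1 2 * f 1 2 3) ∧
    (f 0 2 3 * f 0 1 3 = -(p 0 3 * f 0 1 2) - p 0 3 * f 1 2 3 + f 0 1 3 * f 0 2 3) ∧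
    (f 1 2 3 * f 0 1 3 = -(p 1 3 * f 0 1 2) + p 1 3 * f 0 2 3 + f 0 1 3 * f 1 2 3) ∧
    (f 1 2 3 * f 0 2 3 = -(p 2 3 * f 0 1 2) - p 2 3 * f 0 1 3 + f 0 2 3 * f 1 2 3) := by
  refine ⟨?_, ?_, ?_, ?_, ?_, ?_⟩
  · have h := R.ff 3 0 1 2
    try simp only [R.ps, R.fs, neg_mul, mul_neg, neg_neg, add_mul, R.of] at h
    linear_combination (norm := module) (1 : ℂ) • h
  · have h := R.ff 3 0 2 1
    try simp only [R.ps, R.fs, neg_mul, mul_neg, neg_neg, add_mul, R.of] at h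
    linear_combination (norm := module) (-1 : ℂ) • h
  · have h := R.ff 3 1 2 0
    try simp only [R.ps, R.fs, neg_mul, mul_neg, neg_neg, add_mul, R.of] at h
    linear_combination (norm := module) (1 : ℂ) • h
  · have h := R.ff 2 0 3 1
    try simp only [R.ps, R.fs, neg_mul, mul_neg, neg_neg, add_mul, R.of] at h
    linear_combination (norm := module) (1 : ℂ) • h
  · have h := R.ff 2 1 3 0
    try simp only [R.ps, R.fs, neg_mul, mul_neg, neg_neg, add_mul, R.of] at h
    linear_combination (norm := module) (-1 : ℂ) • h
  · have h := R.ff 1 2 3 0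
    try simp only [R.ps, R.fs, neg_mul, mul_neg, neg_neg, add_mul, R.of] at h
    linear_combination (norm := module) (1 : ℂ) • h

theorem PRel.t0 (R : PRel c p f) :
    (2 : ℂ) • (c 0 * f 1 2 3) - p 0 1 * f 0 2 3 + p 0 2 * f 0 1 3 - p 0 3 * f 0 1 2 = 0 := by
  have h := mul_assoc (f 0 1 3) (p 1 2) (p 0 1)
  simp only [R.op, R.of, R.og] at h
  simp only [mul_add, mul_sub, add_mul, sub_mul, mul_neg, neg_mul, smul_mul_assoc, mul_smul_comm,
    mul_assoc,
    R.pc, R.pc', R.fc, R.fc', R.cen, R.cen', R.op, R.op', R.of, R.of', R.og] at h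
  linear_combination (norm := module) ((1/2) : ℂ) • h

theorem PRel.t2 (R : PRel c p f) :
    -((2 : ℂ) • (c 2 * f 0 1 3)) - p 0 2 * f 1 2 3 + p 1 2 * f 0 2 3 + p 2 3 * f 0 1 2 = 0 := by
  have h := mul_assoc (f 0 1 2) (p 0 3) (p 0 2)
  simp only [R.op, R.of, R.og] at h
  simp only [mul_add, mul_sub, add_mul, sub_mul, mul_neg, neg_mul, smul_mul_assoc, mul_smul_comm,
    mul_assoc,
    R.pc, R.pc', R.fc, R.fc', R.cen, R.cen', R.op, R.op', R.of, R.of', R.og] at h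
  linear_combination (norm := module) ((1/2) : ℂ) • h

theorem PRel.t1 (R : PRel c p f) :
    (2 : ℂ) • (c 1 * f 0 2 3) - p 0 1 * f 1 2 3 - p 1 2 * f 0 1 3 + p 1 3 * f 0 1 2 = 0 := by
  have h := mul_assoc (f 0 1 2) (p 0 3) (p 0 1)
  simp only [R.op, R.of, R.og] at h
  simp only [mul_add, mul_sub, add_mul, sub_mul, mul_neg, neg_mul, smul_mul_assoc, mul_smul_comm,
    mul_assoc,
    R.pc, R.pc', R.fc, R.fc', R.cen, R.cen', R.op, R.op', R.of, R.of', R.og] at h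
  linear_combination (norm := module) ((1/2) : ℂ) • h

theorem PRel.t3 (R : PRel c p f) :
    (2 : ℂ) • (c 3 * f 0 1 2) - p 0 3 * f 1 2 3 + p 1 3 * f 0 2 3 - p 2 3 * f 0 1 3 = 0 := by
  have h := mul_assoc (f 0 1 3) (p 0 3) (p 0 2)
  simp only [R.op, R.of, R.og] at h
  simp only [mul_add, mul_sub, add_mul, sub_mul, mul_neg, neg_mul, smul_mul_assoc, mul_smul_comm,
    mul_assoc,
    R.pc, R.pc', R.fc, R.fc', R.cen, R.cen', R.op, R.op', R.of, R.of', R.og] at h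
  linear_combination (norm := module) ((1/2) : ℂ) • h

theorem PRel.o1 (R : PRel c p f) :
    -((2 : ℂ) • (p 0 1 * p 2 3)) - (2 : ℂ) • (p 0 2 * f 0 1 3) + (2 : ℂ) • (p 0 2 * f 1 2 3)
      + (2 : ℂ) • (p 0 3 * p 1 2) + (2 : ℂ) • (p 0 3 * f 0 1 2) - (2 : ℂ) • (p 1 3 * f 0 2 3)
      - (2 : ℂ) • (p 2 3 * f 0 1 2) - (2 : ℂ) • (p 2 3 * f 0 1 3)
      - (2 : ℂ) • (f 0 1 3 * f 0 2 3) + (2 : ℂ) • (f 0 2 3 * f 1 2 3)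
      - (4 : ℂ) • (c 0 * (c 3 * p 1 2)) + (2 : ℂ) • (c 0 * (p 1 3 * p 2 3))
      + (4 : ℂ) • (c 2 * (c 3 * p 0 1)) - (2 : ℂ) • (c 2 * (p 0 3 * p 1 3))
      + (2 : ℂ) • (c 3 * (p 0 1 * p 0 2)) - (2 : ℂ) • (c 3 * (p 0 2 * p 1 2))
      - p 0 1 * (p 0 3 * p 2 3) - p 0 1 * (p 2 3 * p 2 3) - p 0 2 * (p 0 3 * p 1 3)
      + p 0 2 * (p 1 3 * p 2 3) + p 0 3 * (p 0 3 * p 1 2) + p 0 3 * (p 1 2 * p 2 3) = 0 := by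
  have h := mul_assoc (f 0 2 3) (f 0 1 2) (p 2 3)
  simp only [R.op, R.of, R.og] at h
  simp only [mul_add, mul_sub, add_mul, sub_mul, mul_neg, neg_mul, smul_mul_assoc, mul_smul_comm,
    mul_assoc,
    R.pc, R.pc', R.fc, R.fc', R.cen, R.cen', R.op, R.op', R.of, R.of', R.og] at h
  linear_combination (norm := module) ((-1) : ℂ) • h

theorem PRel.o2 (R : PRel c p f) :
    -((4 : ℂ) • (c 3 * f 0 1 2)) - (2 : ℂ) • (p 0 1 * p 2 3) + (2 : ℂ) • (p 0 1 * f 0 2 3)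
      + (2 : ℂ) • (p 0 1 * f 1 2 3) + (2 : ℂ) • (p 0 2 * p 1 3) + (2 : ℂ) • (p 0 2 * f 0 1 3)
      - (2 : ℂ) • (p 1 3 * f 0 1 2) + (2 : ℂ) • (p 2 3 * f 0 1 3)
      - (2 : ℂ) • (f 0 1 2 * f 0 1 3) + (2 : ℂ) • (f 0 1 3 * f 0 2 3)
      - (4 : ℂ) • (c 0 * (c 1 * p 2 3)) + (4 : ℂ) • (c 0 * (c 3 * p 1 2))
      + (2 : ℂ) • (c 0 * (p 1 2 * p 1 3)) - (2 : ℂ) • (c 0 * (p 1 3 * p 2 3))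
      + (2 : ℂ) • (c 1 * (p 0 2 * p 0 3)) - (2 : ℂ) • (c 3 * (p 0 1 * p 0 2))
      + p 0 1 * (p 0 1 * p 2 3) - p 0 1 * (p 0 2 * p 1 3) - p 0 1 * (p 0 3 * p 1 2)
      + p 0 1 * (p 0 3 * p 2 3) + p 0 2 * (p 0 3 * p 1 3) - p 0 3 * (p 0 3 * p 1 2) = 0 := by
  have h := mul_assoc (f 1 2 3) (f 0 1 3) (p 0 1)
  simp only [R.op, R.of, R.og] at h
  simp only [mul_add, mul_sub, add_mul, sub_mul, mul_neg, neg_mul, smul_mul_assoc, mul_smul_comm,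
    mul_assoc,
    R.pc, R.pc', R.fc, R.fc', R.cen, R.cen', R.op, R.op', R.of, R.of', R.og] at h
  linear_combination (norm := module) ((-1) : ℂ) • h

/-- The element `w` as a function of its arguments. -/
def wPoly (i j k a b t : A) : A :=
  ((1 : ℂ)/4) • (cm a b) ^ 2 - ((1 : ℂ)/2) • acm (a ^ 2) b - ((1 : ℂ)/2) • acm a (b ^ 2)
  + a ^ 2 + b ^ 2 + acm a b + ((1 : ℂ)/2) • ((i + j + k + t) * (acm a b - 2 * a - 2 * b))
  - (i - t) * (j - k) * a - (i - j) * (t - k) * b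
  + (i * k - t * j) * (t - i + j - k) + (i + k) * (t + j)

theorem wElt_eq (C : Finset (Fin 4) → A) (I J K : Finset (Fin 4)) :
    wElt C I J K = wPoly (C I) (C J) (C K) (C (I ∪ J)) (C (J ∪ K)) (C (I ∪ J ∪ K)) := rfl

/-- Determinant-like normal form of `w`. -/
def wNF (i j k x y z g : A) : A :=
  g * g - (2 : ℂ) • g - (2 : ℂ) • (i * y) - (2 : ℂ) • (j * z) + (2 : ℂ) • (k * x) + x * g
  - (2 : ℂ) • (z * y) - z * g + y * g + (4 : ℂ) • (i * (j * k)) - i * (y * y) - j * (z * z)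
  - k * (x * x) + x * (z * y)

set_option maxHeartbeats 4000000 in
theorem wPoly_eq (i j k x y z g : A)
    (hji : j * i = i * j)
    (hki : k * i = i * k)
    (hkj : k * j = j * k)
    (hxi : x * i = i * x)
    (hxj : x * j = j * x)
    (hxk : x * k = k * x)
    (hzi : z * i = i * z)
    (hzj : z * j = j * z)
    (hzk : z * k = k * z)
    (hyi : y * i = i * y)
    (hyj : y * j = j * y)
    (hyk : y * k = k * y)
    (hgi : g * i = i * g)
    (hgj : g * j = j * g)
    (hgk : g * k = k * g)
    (hzx : z * x = x * z + (2 : ℂ) • g)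
    (hyx : y * x = x * y - (2 : ℂ) • g)
    (hyz : y * z = z * y + (2 : ℂ) • g)
    (hgx : g * x = x * g + (2 : ℂ) • g - (2 : ℂ) • (i * y) + (2 : ℂ) • (j * z) + x * z - x * y)
    (hgz : g * z = z * g + (2 : ℂ) • (i * y) - (2 : ℂ) • (k * x) - x * z + z * y)
    (hgy : g * y = y * g - (2 : ℂ) • g - (2 : ℂ) • (j * z) + (2 : ℂ) • (k * x) + x * y - z * y) :
    wPoly i j k (i + j + x) (j + k + y) (i + j + k + x + y + z) = wNF i j k x y z g := by
  have hji' : ∀ q, j * (i * q) = (i * j) * q := fun q => by rw [← mul_assoc, hji]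
  have hki' : ∀ q, k * (i * q) = (i * k) * q := fun q => by rw [← mul_assoc, hki]
  have hkj' : ∀ q, k * (j * q) = (j * k) * q := fun q => by rw [← mul_assoc, hkj]
  have hxi' : ∀ q, x * (i * q) = (i * x) * q := fun q => by rw [← mul_assoc, hxi]
  have hxj' : ∀ q, x * (j * q) = (j * x) * q := fun q => by rw [← mul_assoc, hxj]
  have hxk' : ∀ q, x * (k * q) = (k * x) * q := fun q => by rw [← mul_assoc, hxk]
  have hzi' : ∀ q, z * (i * q) = (i * z) * q := fun q => by rw [← mul_assoc, hzi]
  have hzj' : ∀ q, z * (j * q) = (j * z) * q := fun q => by rw [← mul_assoc, hzj]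
  have hzk' : ∀ q, z * (k * q) = (k * z) * q := fun q => by rw [← mul_assoc, hzk]
  have hyi' : ∀ q, y * (i * q) = (i * y) * q := fun q => by rw [← mul_assoc, hyi]
  have hyj' : ∀ q, y * (j * q) = (j * y) * q := fun q => by rw [← mul_assoc, hyj]
  have hyk' : ∀ q, y * (k * q) = (k * y) * q := fun q => by rw [← mul_assoc, hyk]
  have hgi' : ∀ q, g * (i * q) = (i * g) * q := fun q => by rw [← mul_assoc, hgi]
  have hgj' : ∀ q, g * (j * q) = (j * g) * q := fun q => by rw [← mul_assoc, hgj]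
  have hgk' : ∀ q, g * (k * q) = (k * g) * q := fun q => by rw [← mul_assoc, hgk]
  have hzx' : ∀ q, z * (x * q) = (x * z + (2 : ℂ) • g) * q := fun q => by rw [← mul_assoc, hzx]
  have hyx' : ∀ q, y * (x * q) = (x * y - (2 : ℂ) • g) * q := fun q => by rw [← mul_assoc, hyx]
  have hyz' : ∀ q, y * (z * q) = (z * y + (2 : ℂ) • g) * q := fun q => by rw [← mul_assoc, hyz]
  have hgx' : ∀ q, g * (x * q) = (x * g + (2 : ℂ) • g - (2 : ℂ) • (i * y) + (2 : ℂ) • (j * z) + x * z - x * y) * q := fun q => by rw [← mul_assoc, hgx]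
  have hgz' : ∀ q, g * (z * q) = (z * g + (2 : ℂ) • (i * y) - (2 : ℂ) • (k * x) - x * z + z * y) * q := fun q => by rw [← mul_assoc, hgz]
  have hgy' : ∀ q, g * (y * q) = (y * g - (2 : ℂ) • g - (2 : ℂ) • (j * z) + (2 : ℂ) • (k * x) + x * y - z * y) * q := fun q => by rw [← mul_assoc, hgy]
  have g0 : cm (i + j + x) (j + k + y) = (2 : ℂ) • g := by
    simp only [cm, mul_add, add_mul, hji, hki, hkj, hxi, hxj, hxk, hzi, hzj, hzk, hyi, hyj, hyk, hgi, hgj, hgk, hzx, hyx, hyz, hgx, hgz, hgy,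
    hji', hki', hkj', hxi', hxj', hxk', hzi', hzj', hzk', hyi', hyj', hyk', hgi', hgj', hgk', hzx', hyx', hyz', hgx', hgz', hgy']
    module
  have e1 : (i + j + k + x + y + z) - i + j - k = (2 : ℂ) • j + x + y + z := by module
  have e2 : i + j + k + (i + j + k + x + y + z)
      = (2 : ℂ) • i + (2 : ℂ) • j + (2 : ℂ) • k + x + y + z := by module
  have e3 : i - (i + j + k + x + y + z) = -(j + k + x + y + z) := by abel
  have e4 : i + j + k + x + y + z - k = i + j + x + y + z := by abel
  simp only [wPoly, wNF, g0, e1, e2, e3, e4]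
  simp only [acm, pow_two, two_mul, mul_add, mul_sub, add_mul, sub_mul, mul_neg, neg_mul, smul_mul_assoc, mul_smul_comm,
    mul_assoc,
    add_mul, sub_mul, hji, hki, hkj, hxi, hxj, hxk, hzi, hzj, hzk, hyi, hyj, hyk, hgi, hgj, hgk, hzx, hyx, hyz, hgx, hgz, hgy,
    hji', hki', hkj', hxi', hxj', hxk', hzi', hzj', hzk', hyi', hyj', hyk', hgi', hgj', hgk', hzx', hyx', hyz', hgx', hgz', hgy']
  module

set_option maxHeartbeats 4000000 in
theorem PRel.w01_2_3 (R : PRel c p f) :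
    wPoly (c 0 + c 1 + p 0 1) (c 2) (c 3) (c 0 + c 1 + c 2 + p 0 1 + p 0 2 + p 1 2) (c 2 + c 3 + p 2 3) (c 0 + c 1 + c 2 + c 3 + p 0 1 + p 0 2 + p 0 3 + p 1 2 + p 1 3 + p 2 3)
      = wNF (c 0 + c 1 + p 0 1) (c 2) (c 3) (p 0 2 + p 1 2) (p 2 3) (p 0 3 + p 1 3) (f 0 2 3 + f 1 2 3) := by
  refine Eq.trans ?_ (wPoly_eq (c 0 + c 1 + p 0 1) (c 2) (c 3) (p 0 2 + p 1 2) (p 2 3) (p 0 3 + p 1 3) (f 0 2 3 + f 1 2 3)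
    ?_ ?_ ?_ ?_ ?_ ?_ ?_ ?_ ?_ ?_ ?_ ?_ ?_ ?_ ?_ ?_ ?_ ?_ ?_ ?_ ?_)
  · congr 1 <;> abel
  all_goals
    (simp only [mul_add, mul_sub, add_mul, sub_mul, mul_neg, neg_mul, smul_mul_assoc, mul_smul_comm,
    mul_assoc,
      R.pc, R.pc', R.fc, R.fc', R.cen, R.cen', R.op, R.op', R.of, R.of', R.og]) <;> module

set_option maxHeartbeats 4000000 in
theorem PRel.w0_12_3 (R : PRel c p f) :
    wPoly (c 0) (c 1 + c 2 + p 1 2) (c 3) (c 0 + c 1 + c 2 + p 0 1 + p 0 2 + p 1 2) (c 1 + c 2 + c 3 + p 1 2 + p 1 3 + p 2 3) (c 0 + c 1 + c 2 + c 3 + p 0 1 + p 0 2 + p 0 3 + p 1 2 + p 1 3 + p 2 3)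
      = wNF (c 0) (c 1 + c 2 + p 1 2) (c 3) (p 0 1 + p 0 2) (p 1 3 + p 2 3) (p 0 3) (f 0 1 3 + f 0 2 3) := by
  refine Eq.trans ?_ (wPoly_eq (c 0) (c 1 + c 2 + p 1 2) (c 3) (p 0 1 + p 0 2) (p 1 3 + p 2 3) (p 0 3) (f 0 1 3 + f 0 2 3)
    ?_ ?_ ?_ ?_ ?_ ?_ ?_ ?_ ?_ ?_ ?_ ?_ ?_ ?_ ?_ ?_ ?_ ?_ ?_ ?_ ?_)
  · congr 1 <;> abel
  all_goals
    (simp only [mul_add, mul_sub, add_mul, sub_mul, mul_neg, neg_mul, smul_mul_assoc, mul_smul_comm,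
    mul_assoc,
      R.pc, R.pc', R.fc, R.fc', R.cen, R.cen', R.op, R.op', R.of, R.of', R.og]) <;> module

set_option maxHeartbeats 4000000 in
theorem PRel.w0_1_23 (R : PRel c p f) :
    wPoly (c 0) (c 1) (c 2 + c 3 + p 2 3) (c 0 + c 1 + p 0 1) (c 1 + c 2 + c 3 + p 1 2 + p 1 3 + p 2 3) (c 0 + c 1 + c 2 + c 3 + p 0 1 + p 0 2 + p 0 3 + p 1 2 + p 1 3 + p 2 3)
      = wNF (c 0) (c 1) (c 2 + c 3 + p 2 3) (p 0 1) (p 1 2 + p 1 3) (p 0 2 + p 0 3) (f 0 1 2 + f 0 1 3) := by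
  refine Eq.trans ?_ (wPoly_eq (c 0) (c 1) (c 2 + c 3 + p 2 3) (p 0 1) (p 1 2 + p 1 3) (p 0 2 + p 0 3) (f 0 1 2 + f 0 1 3)
    ?_ ?_ ?_ ?_ ?_ ?_ ?_ ?_ ?_ ?_ ?_ ?_ ?_ ?_ ?_ ?_ ?_ ?_ ?_ ?_ ?_)
  · congr 1 <;> abel
  all_goals
    (simp only [mul_add, mul_sub, add_mul, sub_mul, mul_neg, neg_mul, smul_mul_assoc, mul_smul_comm,
    mul_assoc,
      R.pc, R.pc', R.fc, R.fc', R.cen, R.cen', R.op, R.op', R.of, R.of', R.og]) <;> module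

set_option maxHeartbeats 4000000 in
theorem PRel.w0_2_3 (R : PRel c p f) :
    wPoly (c 0) (c 2) (c 3) (c 0 + c 2 + p 0 2) (c 2 + c 3 + p 2 3) (c 0 + c 2 + c 3 + p 0 2 + p 0 3 + p 2 3)
      = wNF (c 0) (c 2) (c 3) (p 0 2) (p 2 3) (p 0 3) (f 0 2 3) := by
  refine Eq.trans ?_ (wPoly_eq (c 0) (c 2) (c 3) (p 0 2) (p 2 3) (p 0 3) (f 0 2 3)
    ?_ ?_ ?_ ?_ ?_ ?_ ?_ ?_ ?_ ?_ ?_ ?_ ?_ ?_ ?_ ?_ ?_ ?_ ?_ ?_ ?_)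
  · congr 1 <;> abel
  all_goals
    (simp only [mul_add, mul_sub, add_mul, sub_mul, mul_neg, neg_mul, smul_mul_assoc, mul_smul_comm,
    mul_assoc,
      R.pc, R.pc', R.fc, R.fc', R.cen, R.cen', R.op, R.op', R.of, R.of', R.og]) <;> module

set_option maxHeartbeats 4000000 in
theorem PRel.w1_2_3 (R : PRel c p f) :
    wPoly (c 1) (c 2) (c 3) (c 1 + c 2 + p 1 2) (c 2 + c 3 + p 2 3) (c 1 + c 2 + c 3 + p 1 2 + p 1 3 + p 2 3)
      = wNF (c 1) (c 2) (c 3) (p 1 2) (p 2 3) (p 1 3) (f 1 2 3) := by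
  refine Eq.trans ?_ (wPoly_eq (c 1) (c 2) (c 3) (p 1 2) (p 2 3) (p 1 3) (f 1 2 3)
    ?_ ?_ ?_ ?_ ?_ ?_ ?_ ?_ ?_ ?_ ?_ ?_ ?_ ?_ ?_ ?_ ?_ ?_ ?_ ?_ ?_)
  · congr 1 <;> abel
  all_goals
    (simp only [mul_add, mul_sub, add_mul, sub_mul, mul_neg, neg_mul, smul_mul_assoc, mul_smul_comm,
    mul_assoc,
      R.pc, R.pc', R.fc, R.fc', R.cen, R.cen', R.op, R.op', R.of, R.of', R.og]) <;> module

set_option maxHeartbeats 4000000 in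
theorem PRel.w0_1_3 (R : PRel c p f) :
    wPoly (c 0) (c 1) (c 3) (c 0 + c 1 + p 0 1) (c 1 + c 3 + p 1 3) (c 0 + c 1 + c 3 + p 0 1 + p 0 3 + p 1 3)
      = wNF (c 0) (c 1) (c 3) (p 0 1) (p 1 3) (p 0 3) (f 0 1 3) := by
  refine Eq.trans ?_ (wPoly_eq (c 0) (c 1) (c 3) (p 0 1) (p 1 3) (p 0 3) (f 0 1 3)
    ?_ ?_ ?_ ?_ ?_ ?_ ?_ ?_ ?_ ?_ ?_ ?_ ?_ ?_ ?_ ?_ ?_ ?_ ?_ ?_ ?_)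
  · congr 1 <;> abel
  all_goals
    (simp only [mul_add, mul_sub, add_mul, sub_mul, mul_neg, neg_mul, smul_mul_assoc, mul_smul_comm,
    mul_assoc,
      R.pc, R.pc', R.fc, R.fc', R.cen, R.cen', R.op, R.op', R.of, R.of', R.og]) <;> module

set_option maxHeartbeats 4000000 in
theorem PRel.w0_1_2 (R : PRel c p f) :
    wPoly (c 0) (c 1) (c 2) (c 0 + c 1 + p 0 1) (c 1 + c 2 + p 1 2) (c 0 + c 1 + c 2 + p 0 1 + p 0 2 + p 1 2)
      = wNF (c 0) (c 1) (c 2) (p 0 1) (p 1 2) (p 0 2) (f 0 1 2) := by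
  refine Eq.trans ?_ (wPoly_eq (c 0) (c 1) (c 2) (p 0 1) (p 1 2) (p 0 2) (f 0 1 2)
    ?_ ?_ ?_ ?_ ?_ ?_ ?_ ?_ ?_ ?_ ?_ ?_ ?_ ?_ ?_ ?_ ?_ ?_ ?_ ?_ ?_)
  · congr 1 <;> abel
  all_goals
    (simp only [mul_add, mul_sub, add_mul, sub_mul, mul_neg, neg_mul, smul_mul_assoc, mul_smul_comm,
    mul_assoc,
      R.pc, R.pc', R.fc, R.fc', R.cen, R.cen', R.op, R.op', R.of, R.of', R.og]) <;> module

set_option maxHeartbeats 4000000 in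
theorem PRel.d1 (R : PRel c p f) :
    wNF (c 0 + c 1 + p 0 1) (c 2) (c 3) (p 0 2 + p 1 2) (p 2 3) (p 0 3 + p 1 3) (f 0 2 3 + f 1 2 3) - wNF (c 1) (c 2) (c 3) (p 1 2) (p 2 3) (p 1 3) (f 1 2 3)
      = wNF (c 0) (c 1 + c 2 + p 1 2) (c 3) (p 0 1 + p 0 2) (p 1 3 + p 2 3) (p 0 3) (f 0 1 3 + f 0 2 3) - wNF (c 0) (c 1) (c 3) (p 0 1) (p 1 3) (p 0 3) (f 0 1 3) := by
  simp only [wNF, mul_add, mul_sub, add_mul, sub_mul, mul_neg, neg_mul, smul_mul_assoc, mul_smul_comm,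
    mul_assoc,
    R.pc, R.pc', R.fc, R.fc', R.cen, R.cen', R.op, R.op', R.of, R.of', R.og]
  linear_combination (norm := module) (1 : ℂ) • R.o1 + (1 : ℂ) • R.t0 + (1 : ℂ) • R.t2

set_option maxHeartbeats 4000000 in
theorem PRel.d2 (R : PRel c p f) :
    wNF (c 0) (c 1 + c 2 + p 1 2) (c 3) (p 0 1 + p 0 2) (p 1 3 + p 2 3) (p 0 3) (f 0 1 3 + f 0 2 3) - wNF (c 0) (c 2) (c 3) (p 0 2) (p 2 3) (p 0 3) (f 0 2 3)
      = wNF (c 0) (c 1) (c 2 + c 3 + p 2 3) (p 0 1) (p 1 2 + p 1 3) (p 0 2 + p 0 3) (f 0 1 2 + f 0 1 3) - wNF (c 0) (c 1) (c 2) (p 0 1) (p 1 2) (p 0 2) (f 0 1 2) := by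
  simp only [wNF, mul_add, mul_sub, add_mul, sub_mul, mul_neg, neg_mul, smul_mul_assoc, mul_smul_comm,
    mul_assoc,
    R.pc, R.pc', R.fc, R.fc', R.cen, R.cen', R.op, R.op', R.of, R.of', R.og]
  linear_combination (norm := module) (1 : ℂ) • R.o2 + (1 : ℂ) • R.t1 + (1 : ℂ) • R.t3

end normalOrder

/-- In `R(4)`:
`w_{12,3,4} − w_{1,3,4} − w_{2,3,4} = w_{1,23,4} − w_{1,2,4} − w_{1,3,4}
 = w_{1,2,34} − w_{1,2,3} − w_{1,2,4}`
(indices `1,2,3,4` are rendered as `0,1,2,3 : Fin 4`). -/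
theorem stmt7 (C : Finset (Fin 4) → A) (hC0 : C ∅ = 0)
    (h1 : RelR1 C) (h2 : RelR2 C) (h3 : RelR3 C) (h4 : RelR4 C) (h5 : RelR5 C) :
    wElt C {0, 1} {2} {3} - wElt C {0} {2} {3} - wElt C {1} {2} {3}
      = wElt C {0} {1, 2} {3} - wElt C {0} {1} {3} - wElt C {0} {2} {3} ∧
    wElt C {0} {1, 2} {3} - wElt C {0} {1} {3} - wElt C {0} {2} {3}
      = wElt C {0} {1} {2, 3} - wElt C {0} {1} {2} - wElt C {0} {1} {3} := by
  have R := prel_of_rels C h1 h2 h3 h4 h5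
  have b2 : ∀ i j, C {i, j} = C {i} + C {j} + pGen C i j := fun i j => by unfold pGen; abel
  have b012 : C {0, 1, 2} = C {0} + C {1} + C {2} + pGen C 0 1 + pGen C 0 2 + pGen C 1 2 := by
    rw [three_set C h2 0 1 2 (by decide) (by decide) (by decide), b2, b2, b2]; abel
  have b013 : C {0, 1, 3} = C {0} + C {1} + C {3} + pGen C 0 1 + pGen C 0 3 + pGen C 1 3 := by
    rw [three_set C h2 0 1 3 (by decide) (by decide) (by decide), b2, b2, b2]; abel
  have b023 : C {0, 2, 3} = C {0} + C {2} + C {3} + pGen C 0 2 + pGen C 0 3 + pGen C 2 3 := by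
    rw [three_set C h2 0 2 3 (by decide) (by decide) (by decide), b2, b2, b2]; abel
  have b123 : C {1, 2, 3} = C {1} + C {2} + C {3} + pGen C 1 2 + pGen C 1 3 + pGen C 2 3 := by
    rw [three_set C h2 1 2 3 (by decide) (by decide) (by decide), b2, b2, b2]; abel
  have b0123 : C {0, 1, 2, 3} = C {0} + C {1} + C {2} + C {3} + pGen C 0 1 + pGen C 0 2 + pGen C 0 3 + pGen C 1 2 + pGen C 1 3 + pGen C 2 3 := by
    rw [four_set C h2, b2, b2, b2, b2, b2, b2]; module
  have w01_2_3 : wElt C {0, 1} {2} {3} = wNF (C {0} + C {1} + pGen C 0 1) (C {2}) (C {3}) (pGen C 0 2 + pGen C 1 2) (pGen C 2 3) (pGen C 0 3 + pGen C 1 3) (fGen C 0 2 3 + fGen C 1 2 3) := by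
    rw [wElt_eq, show ({0, 1} ∪ {2} ∪ {3} : Finset (Fin 4)) = {0, 1, 2, 3} by decide,
      show ({0, 1} ∪ {2} : Finset (Fin 4)) = {0, 1, 2} by decide,
      show ({2} ∪ {3} : Finset (Fin 4)) = {2, 3} by decide]
    simp only [b2, b012, b013, b023, b123, b0123]
    exact R.w01_2_3
  have w0_12_3 : wElt C {0} {1, 2} {3} = wNF (C {0}) (C {1} + C {2} + pGen C 1 2) (C {3}) (pGen C 0 1 + pGen C 0 2) (pGen C 1 3 + pGen C 2 3) (pGen C 0 3) (fGen C 0 1 3 + fGen C 0 2 3) := by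
    rw [wElt_eq, show ({0} ∪ {1, 2} ∪ {3} : Finset (Fin 4)) = {0, 1, 2, 3} by decide,
      show ({0} ∪ {1, 2} : Finset (Fin 4)) = {0, 1, 2} by decide,
      show ({1, 2} ∪ {3} : Finset (Fin 4)) = {1, 2, 3} by decide]
    simp only [b2, b012, b013, b023, b123, b0123]
    exact R.w0_12_3
  have w0_1_23 : wElt C {0} {1} {2, 3} = wNF (C {0}) (C {1}) (C {2} + C {3} + pGen C 2 3) (pGen C 0 1) (pGen C 1 2 + pGen C 1 3) (pGen C 0 2 + pGen C 0 3) (fGen C 0 1 2 + fGen C 0 1 3) := by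
    rw [wElt_eq, show ({0} ∪ {1} ∪ {2, 3} : Finset (Fin 4)) = {0, 1, 2, 3} by decide,
      show ({0} ∪ {1} : Finset (Fin 4)) = {0, 1} by decide,
      show ({1} ∪ {2, 3} : Finset (Fin 4)) = {1, 2, 3} by decide]
    simp only [b2, b012, b013, b023, b123, b0123]
    exact R.w0_1_23
  have w0_2_3 : wElt C {0} {2} {3} = wNF (C {0}) (C {2}) (C {3}) (pGen C 0 2) (pGen C 2 3) (pGen C 0 3) (fGen C 0 2 3) := by
    rw [wElt_eq, show ({0} ∪ {2} ∪ {3} : Finset (Fin 4)) = {0, 2, 3} by decide,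
      show ({0} ∪ {2} : Finset (Fin 4)) = {0, 2} by decide,
      show ({2} ∪ {3} : Finset (Fin 4)) = {2, 3} by decide]
    simp only [b2, b012, b013, b023, b123, b0123]
    exact R.w0_2_3
  have w1_2_3 : wElt C {1} {2} {3} = wNF (C {1}) (C {2}) (C {3}) (pGen C 1 2) (pGen C 2 3) (pGen C 1 3) (fGen C 1 2 3) := by
    rw [wElt_eq, show ({1} ∪ {2} ∪ {3} : Finset (Fin 4)) = {1, 2, 3} by decide,
      show ({1} ∪ {2} : Finset (Fin 4)) = {1, 2} by decide,
      show ({2} ∪ {3} : Finset (Fin 4)) = {2, 3} by decide]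
    simp only [b2, b012, b013, b023, b123, b0123]
    exact R.w1_2_3
  have w0_1_3 : wElt C {0} {1} {3} = wNF (C {0}) (C {1}) (C {3}) (pGen C 0 1) (pGen C 1 3) (pGen C 0 3) (fGen C 0 1 3) := by
    rw [wElt_eq, show ({0} ∪ {1} ∪ {3} : Finset (Fin 4)) = {0, 1, 3} by decide,
      show ({0} ∪ {1} : Finset (Fin 4)) = {0, 1} by decide,
      show ({1} ∪ {3} : Finset (Fin 4)) = {1, 3} by decide]
    simp only [b2, b012, b013, b023, b123, b0123]
    exact R.w0_1_3
  have w0_1_2 : wElt C {0} {1} {2} = wNF (C {0}) (C {1}) (C {2}) (pGen C 0 1) (pGen C 1 2) (pGen C 0 2) (fGen C 0 1 2) := by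
    rw [wElt_eq, show ({0} ∪ {1} ∪ {2} : Finset (Fin 4)) = {0, 1, 2} by decide,
      show ({0} ∪ {1} : Finset (Fin 4)) = {0, 1} by decide,
      show ({1} ∪ {2} : Finset (Fin 4)) = {1, 2} by decide]
    simp only [b2, b012, b013, b023, b123, b0123]
    exact R.w0_1_2
  have d1 := R.d1
  have d2 := R.d2
  rw [w01_2_3, w0_12_3, w0_1_23, w0_2_3, w1_2_3, w0_1_3, w0_1_2]
  refine ⟨?_, ?_⟩
  · linear_combination (norm := module) (1 : ℂ) • d1
  · linear_combination (norm := module) (1 : ℂ) • d2
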